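/- arXiv:1801.07305 — 2 statements merged into one kernel-verified Lean document; each statement's English description precedes it below -/
import Mathlib

section
/- Let R ⊂ A be a Frobenius extension of rings and let I be an injective left R-module. Then A ⊗_R I is isomorphic to Hom_R(A, I) as left A-modules, and both are injective left A-modules. -/
universe u

section Frobenius

variable {R A : Type u} [Ring R] [Ring A]

/-- A ring extension `ι : R →+* A` (an injective ring homomorphism) is a Frobenius extension
if there is an `R`-`R`-bimodule homomorphism `τ : A → R` together with dual bases
`x i`, `y i` in `A`. -/
def IsFrobeniusExtension (ι : R →+* A) : Prop :=
  Function.Injective ι ∧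
  ∃ (τ : A →+ R) (n : ℕ) (x y : Fin n → A),
    (∀ (r : R) (a : A), τ (ι r * a) = r * τ a) ∧
    (∀ (a : A) (r : R), τ (a * ι r) = τ a * r) ∧
    (∀ a : A, ∑ i, x i * ι (τ (y i * a)) = a) ∧
    (∀ a : A, ∑ i, ι (τ (a * x i)) * y i = a)

/-- The extension of scalars `A ⊗_R N` of a left `R`-module `N` along `ι : R →+* A`,
realized as the quotient of the free left `A`-module on `N` by the bilinearity and
balancing relations.  It is a left `A`-module. -/
abbrev ExtendedTensor (ι : R →+* A) (N : Type u) [AddCommGroup N] [Module R N] : Type u :=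
  (N →₀ A) ⧸ Submodule.span A
    ({x : N →₀ A | ∃ n n' : N,
        x = Finsupp.single (n + n') 1 - Finsupp.single n 1 - Finsupp.single n' 1} ∪
     {x : N →₀ A | ∃ (r : R) (n : N),
        x = Finsupp.single (r • n) 1 - Finsupp.single n (ι r)})

/-- The coinduced module `Hom_R(A, N)` of a left `R`-module `N` along `ι : R →+* A`,
where `A` is a left `R`-module via `ι`.  It is a left `A`-module via `(a • f) b = f (b * a)`. -/
abbrev CoinducedModule (ι : R →+* A) (N : Type u) [AddCommGroup N] [Module R N] : Type u :=
  @LinearMap R R _ _ (RingHom.id R) A N _ _ (Module.compHom A ι) _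

noncomputable instance CoinducedModule.instModule (ι : R →+* A) (N : Type u)
    [AddCommGroup N] [Module R N] : Module A (CoinducedModule ι N) :=
  letI : Module R A := Module.compHom A ι
  { smul := fun a f =>
      { toFun := fun b => f (b * a)
        map_add' := fun b c => by
          show f ((b + c) * a) = f (b * a) + f (c * a)
          rw [add_mul]; exact map_add f _ _
        map_smul' := fun r b => by
          show f (ι r * b * a) = r • f (b * a)
          rw [mul_assoc]
          exact map_smul f r (b * a) }
    one_smul := fun f => LinearMap.ext fun b => by show f (b * 1) = f b; rw [mul_one]
    mul_smul := fun a a' f => LinearMap.ext fun b => by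
      show f (b * (a * a')) = f (b * a * a')
      rw [mul_assoc]
    smul_zero := fun a => LinearMap.ext fun b => rfl
    smul_add := fun a f g => LinearMap.ext fun b => rfl
    add_smul := fun a a' f => LinearMap.ext fun b => by
      show f (b * (a + a')) = f (b * a) + f (b * a')
      rw [mul_add, map_add]
    zero_smul := fun f => LinearMap.ext fun b => by show f (b * 0) = 0; rw [mul_zero, map_zero] }

end Frobenius

/-
Restriction of scalars along `ι` preserves monomorphisms, so its right adjoint `Hom_R(A, -)`
preserves injective modules. For a Frobenius system `(τ, x, y)`, the map sending `a ⊗ n` to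
`b ↦ τ (b * a) • n` is an isomorphism `A ⊗_R N ≃ Hom_R(A, N)` with inverse
`f ↦ ∑ i, x i ⊗ f (y i)`. The two dual basis identities give the two inverse laws, and together
they make the Casimir element `∑ i, x i ⊗ y i` central, which is the `A`-linearity of the inverse.
-/

/-- A Frobenius system for a ring homomorphism `ι : R →+* A`: an `R`-`R`-bimodule homomorphism
`τ : A → R` with dual bases `x`, `y` in `A`, indexed by `κ`. -/
structure FrobeniusSystem {R A : Type*} [Ring R] [Ring A] (ι : R →+* A) (κ : Type*)
    [Fintype κ] where
  τ : A →+ R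
  x : κ → A
  y : κ → A
  τ_map_mul (r : R) (a : A) : τ (ι r * a) = r * τ a
  τ_mul_map (a : A) (r : R) : τ (a * ι r) = τ a * r
  sum_x_mul (a : A) : ∑ i, x i * ι (τ (y i * a)) = a
  sum_mul_y (a : A) : ∑ i, ι (τ (a * x i)) * y i = a

section ChangeOfRings

variable {R A : Type u} [Ring R] [Ring A] {ι : R →+* A}
variable {N : Type u} [AddCommGroup N] [Module R N]

theorem IsFrobeniusExtension.exists_frobeniusSystem (h : IsFrobeniusExtension ι) :
    ∃ n : ℕ, Nonempty (FrobeniusSystem ι (Fin n)) := by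
  obtain ⟨-, τ, n, x, y, hτl, hτr, hx, hy⟩ := h
  exact ⟨n, ⟨⟨τ, x, y, hτl, hτr, hx, hy⟩⟩⟩

namespace CoinducedModule

theorem add_apply (f g : CoinducedModule ι N) (a : A) : (f + g) a = f a + g a := rfl

theorem smul_apply (a : A) (f : CoinducedModule ι N) (b : A) : (a • f) b = f (b * a) := rfl

theorem sum_apply {κ : Type*} (s : Finset κ) (f : κ → CoinducedModule ι N) (a : A) :
    (∑ i ∈ s, f i) a = ∑ i ∈ s, f i a :=
  let : Module R A := Module.compHom A ι
  LinearMap.sum_apply s f a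

theorem apply_map_mul (f : CoinducedModule ι N) (r : R) (a : A) : f (ι r * a) = r • f a :=
  let : Module R A := Module.compHom A ι
  f.map_smul r a

variable (ι N) in
/-- The comparison of `CoinducedModule` with Mathlib's functor `ModuleCat.coextendScalars`. -/
def equivCoextendScalars :
    CoinducedModule ι N ≃ₗ[A] (ModuleCat.coextendScalars ι).obj (ModuleCat.of R N) where
  toFun f := f
  invFun f := f
  map_add' _ _ := rfl
  map_smul' _ _ := rfl

variable (ι) in
theorem injective (hN : Module.Injective R N) : Module.Injective A (CoinducedModule ι N) := by
  have hN' := (Module.injective_iff_injective_object R N).mp hN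
  have hobj := (ModuleCat.restrictCoextendScalarsAdj ι).map_injective _ hN'
  have hcoext := (Module.injective_iff_injective_object A _).mpr hobj
  exact ((Module.Baer.of_injective hcoext).of_equiv (equivCoextendScalars ι N).symm).injective

end CoinducedModule

namespace ExtendedTensor

variable (ι N) in
/-- The map `n ↦ 1 ⊗ n` from `N` to `A ⊗_R N`; a pure tensor `a ⊗ n` is `a • unit ι N n`. -/
noncomputable def unit : N →ₛₗ[ι] ExtendedTensor ι N where
  toFun n := Submodule.Quotient.mk (Finsupp.single n 1)
  map_add' n n' := by
    rw [← Submodule.Quotient.mk_add, Submodule.Quotient.eq, ← sub_sub]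
    exact Submodule.subset_span (Or.inl ⟨n, n', rfl⟩)
  map_smul' r n := by
    rw [← Submodule.Quotient.mk_smul, Submodule.Quotient.eq, Finsupp.smul_single, smul_eq_mul,
      mul_one]
    exact Submodule.subset_span (Or.inr ⟨r, n, rfl⟩)

variable {P : Type*} [AddCommGroup P] [Module A P]

/-- The `A`-linear map `a ⊗ n ↦ a • f n` induced by an `R`-linear map `f` from `N` to the
restriction of scalars of an `A`-module `P`. -/
noncomputable def lift (f : N →ₛₗ[ι] P) : ExtendedTensor ι N →ₗ[A] P :=
  Submodule.liftQ _ (Finsupp.linearCombination A f) <| by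
    rw [Submodule.span_le]
    rintro _ (⟨n, n', rfl⟩ | ⟨r, n, rfl⟩) <;> simp

theorem lift_unit (f : N →ₛₗ[ι] P) (n : N) : lift f (unit ι N n) = f n := by
  change Finsupp.linearCombination A f (Finsupp.single n 1) = f n
  rw [Finsupp.linearCombination_single, one_smul]

theorem linearMap_ext {f g : ExtendedTensor ι N →ₗ[A] P}
    (h : ∀ n, f (unit ι N n) = g (unit ι N n)) : f = g :=
  Submodule.linearMap_qext _ <| Finsupp.lhom_ext' fun n => LinearMap.ext_ring (h n)

end ExtendedTensor

namespace FrobeniusSystem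

open ExtendedTensor

variable {κ : Type*} [Fintype κ] (F : FrobeniusSystem ι κ)

variable (N) in
/-- The map sending `n : N` to the element `b ↦ τ b • n` of `Hom_R(A, N)`. -/
def τSMul : N →ₛₗ[ι] CoinducedModule ι N where
  toFun n :=
    letI : Module R A := Module.compHom A ι
    { toFun b := F.τ b • n
      map_add' b c := by rw [map_add, add_smul]
      map_smul' r b := (congrArg (· • n) (F.τ_map_mul r b)).trans (mul_smul r (F.τ b) n) }
  map_add' n n' := DFunLike.ext _ _ fun b => smul_add (F.τ b) n n'
  map_smul' r n := DFunLike.ext _ _ fun b => by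
    change F.τ b • r • n = F.τ (b * ι r) • n
    rw [F.τ_mul_map, mul_smul]

theorem τSMul_apply (n : N) (b : A) : F.τSMul N n b = F.τ b • n := rfl

theorem sum_smul_τSMul (f : CoinducedModule ι N) :
    ∑ i, F.x i • F.τSMul N (f (F.y i)) = f := by
  refine DFunLike.ext _ _ fun b => ?_
  calc (∑ i, F.x i • F.τSMul N (f (F.y i))) b
      = ∑ i, F.τ (b * F.x i) • f (F.y i) := by
        simp only [CoinducedModule.sum_apply, CoinducedModule.smul_apply, τSMul_apply]
    _ = f (∑ i, ι (F.τ (b * F.x i)) * F.y i) := by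
        simp only [map_sum, CoinducedModule.apply_map_mul]
    _ = f b := by rw [F.sum_mul_y]

theorem sum_smul_unit (n : N) : ∑ i, F.x i • unit ι N (F.τ (F.y i) • n) = unit ι N n :=
  calc ∑ i, F.x i • unit ι N (F.τ (F.y i) • n)
      = (∑ i, F.x i * ι (F.τ (F.y i * 1))) • unit ι N n := by
        simp only [map_smulₛₗ, smul_smul, Finset.sum_smul, mul_one]
    _ = unit ι N n := by rw [F.sum_x_mul, one_smul]

/-- Centrality of the Casimir element `∑ i, x i ⊗ y i`, with the second factor evaluated by `f`. -/
theorem sum_smul_unit_apply_mul (f : CoinducedModule ι N) (a : A) :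
    ∑ i, F.x i • unit ι N (f (F.y i * a)) = a • ∑ i, F.x i • unit ι N (f (F.y i)) :=
  calc ∑ i, F.x i • unit ι N (f (F.y i * a))
      = ∑ i, F.x i • unit ι N (f (∑ j, ι (F.τ (F.y i * a * F.x j)) * F.y j)) := by
        simp only [F.sum_mul_y]
    _ = ∑ i, ∑ j, (F.x i * ι (F.τ (F.y i * (a * F.x j)))) • unit ι N (f (F.y j)) := by
        simp only [map_sum, CoinducedModule.apply_map_mul, map_smulₛₗ, Finset.smul_sum, smul_smul,
          mul_assoc]
    _ = ∑ j, (∑ i, F.x i * ι (F.τ (F.y i * (a * F.x j)))) • unit ι N (f (F.y j)) := by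
        rw [Finset.sum_comm]
        simp only [Finset.sum_smul]
    _ = a • ∑ j, F.x j • unit ι N (f (F.y j)) := by
        simp only [F.sum_x_mul, Finset.smul_sum, smul_smul]

variable (N) in
/-- The map `f ↦ ∑ i, x i ⊗ f (y i)` from `Hom_R(A, N)` to `A ⊗_R N`. -/
noncomputable def coinducedToTensor : CoinducedModule ι N →ₗ[A] ExtendedTensor ι N where
  toFun f := ∑ i, F.x i • unit ι N (f (F.y i))
  map_add' f g := by
    simp only [CoinducedModule.add_apply, map_add, smul_add, Finset.sum_add_distrib]
  map_smul' a f := F.sum_smul_unit_apply_mul f a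

theorem coinducedToTensor_apply (f : CoinducedModule ι N) :
    F.coinducedToTensor N f = ∑ i, F.x i • unit ι N (f (F.y i)) := rfl

variable (N) in
/-- The isomorphism `A ⊗_R N ≃ Hom_R(A, N)` sending `a ⊗ n` to `b ↦ τ (b * a) • n`. -/
noncomputable def tensorEquivCoinduced : ExtendedTensor ι N ≃ₗ[A] CoinducedModule ι N :=
  LinearEquiv.ofLinearMap (lift (F.τSMul N)) (F.coinducedToTensor N)
    (LinearMap.ext fun f => by
      simp only [LinearMap.comp_apply, LinearMap.id_apply, coinducedToTensor_apply, map_sum,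
        map_smul, lift_unit, sum_smul_τSMul])
    (linearMap_ext fun n => by
      simp only [LinearMap.comp_apply, LinearMap.id_apply, lift_unit, coinducedToTensor_apply,
        τSMul_apply, sum_smul_unit])

end FrobeniusSystem

end ChangeOfRings

section Statement

variable {R A : Type u} [Ring R] [Ring A]

theorem stmt14_general (ι : R →+* A) {κ : Type*} [Fintype κ] (F : FrobeniusSystem ι κ)
    (I : Type u) [AddCommGroup I] [Module R I] (hI : Module.Injective R I) :
    Nonempty (ExtendedTensor ι I ≃ₗ[A] CoinducedModule ι I) ∧
      Module.Injective A (ExtendedTensor ι I) ∧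
      Module.Injective A (CoinducedModule ι I) := by
  have e := F.tensorEquivCoinduced I
  have hcoind := CoinducedModule.injective ι hI
  exact ⟨⟨e⟩, ((Module.Baer.of_injective hcoind).of_equiv e.symm).injective, hcoind⟩

theorem stmt14 (ι : R →+* A) (hF : IsFrobeniusExtension ι)
    (I : Type u) [AddCommGroup I] [Module R I] (hI : Module.Injective R I) :
    Nonempty (ExtendedTensor ι I ≃ₗ[A] CoinducedModule ι I) ∧
      Module.Injective A (ExtendedTensor ι I) ∧
      Module.Injective A (CoinducedModule ι I) := by
  obtain ⟨_, ⟨F⟩⟩ := hF.exists_frobeniusSystem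
  exact stmt14_general ι F I hI

end Statement
end

section
/- Let R ⊂ A be a split Frobenius extension of rings. Then every injective left R-module has finite projective dimension over R if and only if every injective left A-module has finite projective dimension over A. -/
universe u

section Frobenius

variable {R A : Type u} [Ring R] [Ring A]

/-- A ring extension `ι : R →+* A` is split if `R` is a direct summand of `A` as an
`R`-`R`-bimodule, i.e. there is an `R`-`R`-bimodule homomorphism `π : A → R` with
`π ∘ ι = id`. -/
def IsSplitExtension (ι : R →+* A) : Prop :=
  ∃ π : A →+ R,
    (∀ (r : R) (a : A), π (ι r * a) = r * π a) ∧
    (∀ (a : A) (r : R), π (a * ι r) = π a * r) ∧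
    (∀ r : R, π (ι r) = r)

end Frobenius

/-- `pdimLE R n M` means that `M` admits a projective resolution of length `n`. -/
def pdimLE (R : Type u) [Ring R] : ℕ → ModuleCat.{u} R → Prop
  | 0, M => Module.Projective R M
  | n + 1, M => ∃ (G : ModuleCat.{u} R) (f : G →ₗ[R] M),
      Function.Surjective f ∧ Module.Projective R G ∧
      pdimLE R n (ModuleCat.of R ↥(LinearMap.ker f))

/-- The projective dimension of a left `R`-module, in `ℕ∞`. -/
noncomputable def pdim (R : Type u) [Ring R] (M : ModuleCat.{u} R) : ℕ∞ :=
  sInf {k : ℕ∞ | ∃ n : ℕ, k = (n : ℕ∞) ∧ pdimLE R n M}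

/-!
For a Frobenius extension, restriction and coextension of scalars form a Frobenius pair: each is
left and right adjoint to the other. Hence both are exact and preserve projectives and injectives,
so neither raises projective dimension. Let `F ⊣ G` be either of the two adjunctions. If `F` is
faithful, then the unit `X ⟶ G (F X)` is a monomorphism, which splits when `X` is injective; thus
`X` is a retract of `G (F X)`, and its projective dimension is at most that of the injective object
`F X`. Restriction is always faithful, and coextension is faithful as soon as `R` is a direct
summand of `A` as a left `R`-module.
-/

open CategoryTheory ModuleCat

universe v u₁ u₂

section Abelian

variable {C D : Type*} [Category* C] [Category* D] [Abelian C] [Abelian D]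

theorem hasProjectiveDimensionLT_obj [EnoughProjectives C] (F : C ⥤ D)
    [Limits.PreservesFiniteLimits F] [Limits.PreservesFiniteColimits F]
    [F.PreservesProjectiveObjects] {n : ℕ} (X : C) (hX : HasProjectiveDimensionLT X n) :
    HasProjectiveDimensionLT (F.obj X) n := by
  have : F.Additive := F.additive_of_preserves_binary_products
  induction n using Nat.twoStepInduction generalizing X with
  | zero =>
    rw [hasProjectiveDimensionLT_zero_iff_isZero] at hX ⊢
    exact F.map_isZero hX
  | one =>
    rw [← projective_iff_hasProjectiveDimensionLT_one] at hX ⊢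
    exact F.projective_obj X
  | more n _ ih =>
    have hS : (ShortComplex.mk _ _ (Limits.kernel.condition (Projective.π X))).ShortExact :=
      .mk (ShortComplex.exact_kernel _)
    have hK := (hS.hasProjectiveDimensionLT_X₃_iff n inferInstance).1 hX
    exact ((hS.map_of_exact F).hasProjectiveDimensionLT_X₃_iff n
      (F.projective_obj (Projective.over X))).2 (ih _ hK)

theorem projectiveDimension_obj_le [EnoughProjectives C] (F : C ⥤ D)
    [Limits.PreservesFiniteLimits F] [Limits.PreservesFiniteColimits F]
    [F.PreservesProjectiveObjects] (X : C) :
    projectiveDimension (F.obj X) ≤ projectiveDimension X :=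
  sInf_le_sInf fun _ hn i hi ↦ hasProjectiveDimensionLT_obj F X (hn i hi)

variable [EnoughProjectives D] {F : C ⥤ D} {G : D ⥤ C} [F.Faithful]

theorem projectiveDimension_le_obj_of_injective (adj : F ⊣ G) (adj' : G ⊣ F) (X : C)
    [Injective X] : projectiveDimension X ≤ projectiveDimension (F.obj X) := by
  have := adj.isLeftAdjoint
  have := adj.isRightAdjoint
  have := adj'.isLeftAdjoint
  have : G.PreservesProjectiveObjects :=
    Functor.preservesProjectiveObjects_of_adjunction_of_preservesEpimorphisms adj'
  have : Mono (adj.unit.app X) := adj.unit_mono_of_L_faithful X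
  have retract : Retract X (G.obj (F.obj X)) :=
    ⟨adj.unit.app X, Injective.factorThru (𝟙 X) (adj.unit.app X),
      Injective.comp_factorThru _ _⟩
  exact retract.projectiveDimension_le.trans (projectiveDimension_obj_le G (F.obj X))

theorem projectiveDimension_ne_top_of_injective (adj : F ⊣ G) (adj' : G ⊣ F)
    (hD : ∀ Y : D, Injective Y → projectiveDimension Y ≠ ⊤) (X : C) (hX : Injective X) :
    projectiveDimension X ≠ ⊤ := by
  have := adj.isRightAdjoint
  have : F.PreservesInjectiveObjects :=
    Functor.preservesInjectiveObjects_of_adjunction_of_preservesMonomorphisms adj'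
  exact ne_top_of_le_ne_top (hD _ (F.injective_obj X))
    (projectiveDimension_le_obj_of_injective adj adj' X)

end Abelian

section ProjectiveDimension

theorem pdimLE_iff_hasProjectiveDimensionLE {R : Type u} [Ring R] {n : ℕ}
    {M : ModuleCat.{u} R} : pdimLE R n M ↔ HasProjectiveDimensionLE M n := by
  induction n generalizing M with
  | zero =>
    rw [← projective_iff_hasProjectiveDimensionLE_zero]
    exact IsProjective.iff_projective M
  | succ n ih =>
    constructor
    · rintro ⟨G, f, hf, hG, hK⟩
      exact ((LinearMap.shortExact_shortComplexKer hf).hasProjectiveDimensionLT_X₃_iff n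
        ((IsProjective.iff_projective G).1 hG)).2 (ih.1 hK)
    · intro hM
      have hS := M.shortExact_projectiveShortComplex
      exact ⟨M.projectiveShortComplex.X₂, M.projectiveShortComplex.g.hom,
        (ModuleCat.epi_iff_surjective _).1 hS.epi_g, inferInstance,
        ih.2 ((hS.hasProjectiveDimensionLT_X₃_iff n inferInstance).1 hM)⟩

theorem pdim_ne_top_iff_projectiveDimension_ne_top {R : Type u} [Ring R]
    {M : ModuleCat.{u} R} : pdim R M ≠ ⊤ ↔ projectiveDimension M ≠ ⊤ := by
  simp [pdim, projectiveDimension_ne_top_iff, pdimLE_iff_hasProjectiveDimensionLE]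

end ProjectiveDimension

/-- A Frobenius system for `ι : R →+* A`: a homomorphism of `R`-`R`-bimodules `trace : A → R`
with dual bases `x`, `y`. Left `R`-linearity is bundled into `trace`, whose source is `A` as a left
`R`-module. The system is the data from which `coextendScalars ι ⊣ restrictScalars ι` is built. -/
structure FrobeniusSystem_s18 {R : Type u₁} {A : Type u₂} [Ring R] [Ring A] (ι : R →+* A) where
  trace : (restrictScalars ι).obj (of A A) →ₗ[R] R
  trace_mul (a : A) (r : R) : trace (a * ι r : A) = trace a * r
  card : ℕ
  x : Fin card → A
  y : Fin card → A
  sum_x_mul (a : A) : ∑ i, x i * ι (trace (y i * a : A)) = a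
  sum_mul_y (a : A) : ∑ i, ι (trace (a * x i : A)) * y i = a

namespace FrobeniusSystem_s18

variable {R : Type u₁} {A : Type u₂} [Ring R] [Ring A] {ι : R →+* A} (S : FrobeniusSystem_s18 ι)

theorem sum_trace_smul_apply_y {X : Type*} [AddCommGroup X] [Module R X]
    (φ : (restrictScalars ι).obj (of A A) →ₗ[R] X) (a : A) :
    ∑ i, S.trace (a * S.x i : A) • φ (S.y i) = φ a := by
  conv_rhs => rw [← S.sum_mul_y a]
  exact ((map_sum φ _ _).trans (Finset.sum_congr rfl fun i _ ↦ φ.map_smul _ (S.y i))).symm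

/-- The Casimir element `∑ i, x i ⊗ y i` of `A ⊗[R] A` commutes with every `b : A`. -/
theorem sum_x_smul_apply_y_mul {M : ModuleCat.{v} A}
    (φ : (restrictScalars ι).obj (of A A) →ₗ[R] (restrictScalars ι).obj M) (b : A) :
    ∑ i, S.x i • (φ (S.y i * b : A) : M) = b • ∑ i, S.x i • (φ (S.y i) : M) :=
  calc ∑ i, S.x i • (φ (S.y i * b : A) : M)
    _ = ∑ i, S.x i • ∑ j, ι (S.trace (S.y i * b * S.x j : A)) • (φ (S.y j) : M) :=
      Finset.sum_congr rfl fun i _ ↦ congrArg (S.x i • ·) (S.sum_trace_smul_apply_y φ _).symm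
    _ = ∑ j, (∑ i, S.x i * ι (S.trace (S.y i * (b * S.x j) : A))) • (φ (S.y j) : M) := by
      simp only [Finset.smul_sum, Finset.sum_smul, mul_smul, mul_assoc]
      exact Finset.sum_comm
    _ = b • ∑ i, S.x i • (φ (S.y i) : M) := by
      simp only [S.sum_x_mul, Finset.smul_sum, mul_smul]

/-- The unit `X ⟶ Hom_R(A, X)`, `x ↦ (a ↦ trace a • x)`, of `S.coextendRestrictScalarsAdj`. -/
noncomputable def unitApp (X : ModuleCat.{max v u₂} R) :
    X ⟶ (restrictScalars ι).obj ((coextendScalars ι).obj X) :=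
  ofHom (Y := (restrictScalars ι).obj ((coextendScalars ι).obj X))
    { toFun x := (CoextendScalars.equiv ι X).symm (S.trace.smulRight x)
      map_add' x x' := CoextendScalars.ext <| LinearMap.ext fun a : A ↦
        smul_add (S.trace a) x x'
      map_smul' r x := CoextendScalars.ext <| LinearMap.ext fun a : A ↦ by
        change S.trace a • r • x = S.trace (a * ι r : A) • x
        rw [S.trace_mul, mul_smul] }

/-- The counit `Hom_R(A, M) ⟶ M`, `φ ↦ ∑ i, x i • φ (y i)`, of `S.coextendRestrictScalarsAdj`. -/
noncomputable def counitApp (M : ModuleCat.{max v u₂} A) :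
    (coextendScalars ι).obj ((restrictScalars ι).obj M) ⟶ M :=
  ofHom (X := (coextendScalars ι).obj ((restrictScalars ι).obj M))
    { toFun φ := ∑ i, S.x i • (φ (S.y i) : M)
      map_add' φ ψ :=
        (Finset.sum_congr rfl fun i _ ↦ smul_add (S.x i) (φ (S.y i) : M) (ψ (S.y i))).trans
          Finset.sum_add_distrib
      map_smul' b φ := S.sum_x_smul_apply_y_mul (CoextendScalars.equiv ι _ φ) b }

theorem counitApp_naturality_apply {M N : ModuleCat.{max v u₂} A} (f : M ⟶ N)
    (φ : (coextendScalars ι).obj ((restrictScalars ι).obj M)) :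
    S.counitApp.{v} N ((coextendScalars ι).map ((restrictScalars ι).map f) φ) =
      f (S.counitApp.{v} M φ) :=
  calc ∑ i, S.x i • f (φ (S.y i) : M)
    _ = ∑ i, f (S.x i • (φ (S.y i) : M)) :=
      Finset.sum_congr rfl fun i _ ↦ (f.hom.map_smul (S.x i) (φ (S.y i) : M)).symm
    _ = f (∑ i, S.x i • (φ (S.y i) : M)) := (map_sum f.hom _ _).symm

theorem counitApp_map_unitApp_apply (X : ModuleCat.{max v u₂} R)
    (φ : (coextendScalars ι).obj X) :
    S.counitApp.{v} ((coextendScalars ι).obj X) ((coextendScalars ι).map (S.unitApp.{v} X) φ) =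
      φ := by
  refine CoextendScalars.ext <| LinearMap.ext fun a : A ↦ ?_
  let evalAt : (coextendScalars ι).obj X →+ X :=
    (LinearMap.evalAddMonoidHom (M := (restrictScalars ι).obj (of A A)) a).comp
      (CoextendScalars.equiv ι X).toAddMonoidHom
  exact (map_sum evalAt _ _).trans (S.sum_trace_smul_apply_y (CoextendScalars.equiv ι X φ) a)

theorem counitApp_unitApp_apply (M : ModuleCat.{max v u₂} A) (m : M) :
    S.counitApp.{v} M (S.unitApp.{v} ((restrictScalars ι).obj M) m) = m :=
  calc ∑ i, S.x i • ι (S.trace (S.y i)) • m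
    _ = (∑ i, S.x i * ι (S.trace (S.y i * 1 : A))) • m := by
      simp only [Finset.sum_smul, mul_smul, mul_one]
    _ = m := by rw [S.sum_x_mul, one_smul]

/-- A Frobenius system makes coextension of scalars also left adjoint to restriction. -/
noncomputable def coextendRestrictScalarsAdj :
    coextendScalars.{u₁, u₂, max v u₂} ι ⊣ restrictScalars.{max v u₂} ι :=
  Adjunction.mkOfUnitCounit
    { unit :=
        { app := S.unitApp.{v}
          naturality X Y f := by
            ext x
            exact CoextendScalars.ext <| LinearMap.ext fun a : A ↦
              (f.hom.map_smul (S.trace a) x).symm }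
      counit :=
        { app := S.counitApp.{v}
          naturality M N f := by
            ext φ
            exact S.counitApp_naturality_apply f φ }
      left_triangle := by
        ext X φ
        exact S.counitApp_map_unitApp_apply X φ
      right_triangle := by
        ext M m
        exact S.counitApp_unitApp_apply M m }

end FrobeniusSystem_s18

theorem IsFrobeniusExtension.nonempty_frobeniusSystem {R A : Type u} [Ring R] [Ring A]
    {ι : R →+* A} (hF : IsFrobeniusExtension ι) : Nonempty (FrobeniusSystem_s18 ι) := by
  obtain ⟨-, τ, n, x, y, τ_mul_left, τ_mul_right, sum_x_mul, sum_mul_y⟩ := hF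
  exact ⟨⟨{ τ with map_smul' := τ_mul_left }, τ_mul_right, n, x, y, sum_x_mul, sum_mul_y⟩⟩

/-- `R` is a direct summand of `A` as a left `R`-module: there is a left `R`-linear map `π : A → R`
with `π 1 = 1`. This one-sided form of `IsSplitExtension` makes coextension of scalars along `ι`
faithful. -/
def IsLeftSplitExtension {R : Type u₁} {A : Type u₂} [Ring R] [Ring A] (ι : R →+* A) : Prop :=
  ∃ π : A →+ R, (∀ (r : R) (a : A), π (ι r * a) = r * π a) ∧ π 1 = 1

theorem IsSplitExtension.isLeftSplitExtension {R A : Type u} [Ring R] [Ring A] {ι : R →+* A}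
    (hS : IsSplitExtension ι) : IsLeftSplitExtension ι := by
  obtain ⟨π, π_mul_left, -, π_ι⟩ := hS
  exact ⟨π, π_mul_left, by simpa using π_ι 1⟩

theorem IsLeftSplitExtension.faithful_coextendScalars {R : Type u₁} {A : Type u₂} [Ring R] [Ring A]
    {ι : R →+* A} (hL : IsLeftSplitExtension ι) :
    (coextendScalars.{u₁, u₂, v} ι).Faithful := by
  obtain ⟨π, π_mul_left, π_one⟩ := hL
  let π' : (restrictScalars ι).obj (of A A) →ₗ[R] R := { π with map_smul' := π_mul_left }
  refine ⟨fun {X Y f g} hfg ↦ ?_⟩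
  ext x
  have h : f (π 1 • x) = g (π 1 • x) := congrArg
    (fun k ↦ k.hom ((CoextendScalars.equiv ι X).symm (π'.smulRight x)) (1 : A)) hfg
  simpa only [π_one, one_smul] using h

theorem stmt18_general {R A : Type u} [Ring R] [Ring A] (ι : R →+* A)
    (hF : IsFrobeniusExtension ι) (hL : IsLeftSplitExtension ι) :
    (∀ M : ModuleCat.{u} R, Module.Injective R M → pdim R M ≠ ⊤) ↔
    (∀ M : ModuleCat.{u} A, Module.Injective A M → pdim A M ≠ ⊤) := by
  obtain ⟨S⟩ := hF.nonempty_frobeniusSystem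
  have := hL.faithful_coextendScalars
  have restrict_adj_coextend := restrictCoextendScalarsAdj.{u} ι
  have coextend_adj_restrict := S.coextendRestrictScalarsAdj.{u}
  simp only [pdim_ne_top_iff_projectiveDimension_ne_top, Module.injective_iff_injective_object]
  exact ⟨projectiveDimension_ne_top_of_injective restrict_adj_coextend coextend_adj_restrict,
    projectiveDimension_ne_top_of_injective coextend_adj_restrict restrict_adj_coextend⟩

section Statement

variable {R A : Type u} [Ring R] [Ring A]

theorem stmt18 (ι : R →+* A) (hF : IsFrobeniusExtension ι) (hS : IsSplitExtension ι) :
    (∀ M : ModuleCat.{u} R, Module.Injective R M → pdim R M ≠ ⊤) ↔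
    (∀ M : ModuleCat.{u} A, Module.Injective A M → pdim A M ≠ ⊤) :=
  stmt18_general ι hF hS.isLeftSplitExtension

end Statement
end
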